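/- arXiv:0806.0855 — 2 statements merged into one kernel-verified Lean document; each statement's English description precedes it below -/
import Mathlib

section
/- Detection for the optimized iteration: suppose R is Hermitian with trace(R) = 1 and not positive semidefinite, B₁ is positive definite, and the unitaries U_n are chosen optimally, i.e. R · B_n U_n is positive semidefinite for every n ≥ 1. Then the expectation values w_n = trace(R · B_n B_n†) diverge to −∞; in particular there exists N₀ ∈ ℕ such that w_n < 0 for all n ≥ N₀, so the optimized iteration always detects the state. -/
open Matrix ComplexOrder Filter

/-!
Put `P k = R * B k * U k` and `t k = tr (P k) ≥ 0`. Expanding the recursion, one step changes `w k`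
by `-(2 - tr R) * t k ^ 2`, so it suffices to bound `t k` away from zero. Since `P k` is positive
semidefinite and `U k` is unitary, `P k = |R * B k|` dominates `R * B k` once the latter is
Hermitian; as `R * B (k + 1) = P k - t k • R`, the matrices `P k + (t 0 + ⋯ + t (k - 1)) • R`
increase with `k`, and the first of them is `P 0 ≥ 0`. Combined with `P k ≤ t k • 1` this gives
`t k • 1 + (t 0 + ⋯ + t (k - 1)) • R ≥ 0`, and a negative eigenvalue `-ε` of `R` yields
`t k ≥ ε * (t 0 + ⋯ + t (k - 1)) ≥ ε * t 0`.
-/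

theorem tendsto_atBot_of_succ_le_sub {α : Type*} [Field α] [LinearOrder α] [IsStrictOrderedRing α]
    [Archimedean α] {w : ℕ → α} {c : α} (hc : 0 < c) (hw : ∀ k, w (k + 1) ≤ w k - c) :
    Tendsto w atTop atBot := by
  have hlin (k : ℕ) : w k ≤ w 0 + -(k * c) := by
    induction k with
    | zero => simp
    | succ k ih => push_cast; linarith [hw k]
  exact tendsto_atBot_mono hlin <| tendsto_atBot_add_const_left _ _ <|
    tendsto_neg_atTop_atBot.comp (tendsto_natCast_atTop_atTop.atTop_mul_const hc)

section StarOrderedAlgebra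

variable {A : Type*} [Ring A] [StarRing A] [PartialOrder A] [StarOrderedRing A] [TopologicalSpace A]
  [Algebra ℝ A] [ContinuousFunctionalCalculus ℝ A IsSelfAdjoint] [NonnegSpectrumClass ℝ A]

theorem exists_pos_forall_mul_le_of_not_nonneg {a : A} (ha : IsSelfAdjoint a) (hneg : ¬ 0 ≤ a) :
    ∃ ε > 0, ∀ s t : ℝ, 0 ≤ algebraMap ℝ A t + s • a → ε * s ≤ t := by
  obtain ⟨μ, hμ, hμ0⟩ : ∃ μ ∈ spectrum ℝ a, μ < 0 := by
    simpa only [StarOrderedRing.nonneg_iff_spectrum_nonneg (R := ℝ) a, not_forall, not_le,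
      exists_prop] using hneg
  refine ⟨-μ, neg_pos.2 hμ0, fun s t hst ↦ ?_⟩
  have hmem : t + s * μ ∈ spectrum ℝ (algebraMap ℝ A t + s • a) := by
    have haeval := spectrum.subset_polynomial_aeval a
      (Polynomial.C t + Polynomial.C s * Polynomial.X) (Set.mem_image_of_mem _ hμ)
    simpa only [map_add, map_mul, Polynomial.aeval_C, Polynomial.aeval_X, Polynomial.eval_add,
      Polynomial.eval_mul, Polynomial.eval_C, Polynomial.eval_X, ← Algebra.smul_def] using haeval
  linarith [spectrum_nonneg_of_nonneg hst hmem]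

theorem le_mul_of_mem_unitary_of_nonneg [IsTopologicalRing A] [T2Space A] {a u : A}
    (ha : IsSelfAdjoint a) (hu : u ∈ unitary A) (hau : 0 ≤ a * u) : a ≤ a * u := by
  have habs : CFC.abs a = a * u := by
    refine CFC.sqrt_unique ?_ hau
    have hcomm : a * u = star u * a := by
      simpa only [star_mul, ha.star_eq] using (IsSelfAdjoint.of_nonneg hau).star_eq.symm
    nth_rw 2 [hcomm]
    rw [mul_assoc, ← mul_assoc u, Unitary.mul_star_self_of_mem hu, one_mul, ha.star_eq]
  rw [← sub_nonneg, ← habs, CFC.abs_sub_self a]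
  exact nsmul_nonneg (CFC.negPart_nonneg a) 2

end StarOrderedAlgebra

section Matrix

variable {n 𝕜 : Type*} [Fintype n] [DecidableEq n] [RCLike 𝕜]

theorem trace_mul_sub_trace_smul_one_mul_conjTranspose {α : Type*} [CommRing α] [StarRing α]
    {R : Matrix n n α} (hR : R.IsHermitian) (X : Matrix n n α) :
    (R * ((X - (R * X).trace • 1) * (X - (R * X).trace • 1)ᴴ)).trace =
      (R * (X * Xᴴ)).trace - (2 - R.trace) * ((R * X).trace * star (R * X).trace) := by
  have hstar : (R * Xᴴ).trace = star (R * X).trace := by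
    rw [← trace_conjTranspose, conjTranspose_mul, hR.eq, trace_mul_comm]
  simp only [conjTranspose_sub, conjTranspose_smul, conjTranspose_one, mul_sub, sub_mul,
    smul_mul, Matrix.mul_smul, one_mul, mul_one, trace_sub, trace_smul, smul_eq_mul, hstar]
  ring

open scoped MatrixOrder in
theorem le_algebraMap_norm_trace_of_posSemidef {P : Matrix n n 𝕜} (hP : P.PosSemidef) :
    P ≤ algebraMap ℝ (Matrix n n 𝕜) ‖P.trace‖ := by
  refine le_algebraMap_of_spectrum_le (a := P) ?_ hP.isHermitian.isSelfAdjoint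
  rw [hP.isHermitian.spectrum_real_eq_range_eigenvalues]
  rintro _ ⟨i, rfl⟩
  have hsum : 0 ≤ ∑ j, hP.isHermitian.eigenvalues j :=
    Finset.sum_nonneg fun j _ ↦ hP.eigenvalues_nonneg j
  rw [hP.isHermitian.trace_eq_sum_eigenvalues, ← RCLike.ofReal_sum, RCLike.norm_of_nonneg hsum]
  exact Finset.single_le_sum (fun j _ ↦ hP.eigenvalues_nonneg j) (Finset.mem_univ i)

/-- The iteration `B (k + 1) = B k * U k - tr (R * B k * U k) • 1` with optimally chosen unitaries
`U k`, namely those making `R * B k * U k` positive semidefinite. The sequences start at `0`, so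
`B 0` is the `B₁` of the paper. -/
structure IsOptimizedIteration (R : Matrix n n 𝕜) (B U : ℕ → Matrix n n 𝕜) : Prop where
  mem_unitaryGroup (k : ℕ) : U k ∈ unitaryGroup n 𝕜
  succ_eq (k : ℕ) : B (k + 1) = B k * U k - (R * (B k * U k)).trace • (1 : Matrix n n 𝕜)
  posSemidef (k : ℕ) : (R * (B k * U k)).PosSemidef

namespace IsOptimizedIteration

variable {R : Matrix n n 𝕜} {B U : ℕ → Matrix n n 𝕜}

theorem re_trace_succ (h : IsOptimizedIteration R B U) (hR : R.IsHermitian) (k : ℕ) :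
    RCLike.re (R * (B (k + 1) * (B (k + 1))ᴴ)).trace =
      RCLike.re (R * (B k * (B k)ᴴ)).trace -
        (2 - RCLike.re R.trace) * ‖(R * (B k * U k)).trace‖ ^ 2 := by
  have hU : B k * U k * (B k * U k)ᴴ = B k * (B k)ᴴ := by
    rw [conjTranspose_mul, mul_assoc, ← mul_assoc (U k), ← star_eq_conjTranspose (U k),
      mem_unitaryGroup_iff.1 (h.mem_unitaryGroup k), one_mul]
  rw [h.succ_eq, trace_mul_sub_trace_smul_one_mul_conjTranspose hR, hU, RCLike.star_def,
    RCLike.mul_conj, ← RCLike.ofReal_pow, map_sub, RCLike.re_mul_ofReal]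
  simp

theorem mul_succ_eq (h : IsOptimizedIteration R B U) (k : ℕ) :
    R * B (k + 1) = R * (B k * U k) - ‖(R * (B k * U k)).trace‖ • R := by
  rw [h.succ_eq, mul_sub, Matrix.mul_smul, mul_one, RCLike.real_smul_eq_coe_smul (K := 𝕜),
    RCLike.norm_of_nonneg' (h.posSemidef k).trace_nonneg]

theorem isHermitian_mul_succ (h : IsOptimizedIteration R B U) (hR : R.IsHermitian) (k : ℕ) :
    (R * B (k + 1)).IsHermitian := by
  rw [h.mul_succ_eq]
  exact (h.posSemidef k).isHermitian.sub (IsSelfAdjoint.smul (.all _) hR)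

open scoped MatrixOrder in
theorem monotone_add_sum_norm_trace_smul (h : IsOptimizedIteration R B U) (hR : R.IsHermitian) :
    Monotone fun k ↦
      R * (B k * U k) + (∑ j ∈ Finset.range k, ‖(R * (B j * U j)).trace‖) • R := by
  refine monotone_nat_of_le_succ fun k ↦ ?_
  have hle : R * B (k + 1) ≤ R * (B (k + 1) * U (k + 1)) := by
    rw [← mul_assoc]
    refine le_mul_of_mem_unitary_of_nonneg (h.isHermitian_mul_succ hR k).isSelfAdjoint
      (h.mem_unitaryGroup (k + 1)) ?_
    simpa only [mul_assoc] using (h.posSemidef (k + 1)).nonneg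
  calc R * (B k * U k) + (∑ j ∈ Finset.range k, ‖(R * (B j * U j)).trace‖) • R
      = R * B (k + 1) + (∑ j ∈ Finset.range (k + 1), ‖(R * (B j * U j)).trace‖) • R := by
        rw [h.mul_succ_eq, Finset.sum_range_succ, add_smul]; abel
    _ ≤ _ := add_le_add_left hle _

open scoped MatrixOrder in
theorem algebraMap_norm_trace_add_smul_nonneg (h : IsOptimizedIteration R B U)
    (hR : R.IsHermitian) (k : ℕ) :
    0 ≤ algebraMap ℝ (Matrix n n 𝕜) ‖(R * (B k * U k)).trace‖ +
      (∑ j ∈ Finset.range k, ‖(R * (B j * U j)).trace‖) • R := by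
  calc 0 ≤ R * (B 0 * U 0) := (h.posSemidef 0).nonneg
    _ ≤ R * (B k * U k) + (∑ j ∈ Finset.range k, ‖(R * (B j * U j)).trace‖) • R := by
      simpa using h.monotone_add_sum_norm_trace_smul hR (Nat.zero_le k)
    _ ≤ _ := add_le_add_left (le_algebraMap_norm_trace_of_posSemidef (h.posSemidef k)) _

theorem norm_trace_zero_pos (h : IsOptimizedIteration R B U) (h0 : R * B 0 ≠ 0) :
    0 < ‖(R * (B 0 * U 0)).trace‖ := by
  rw [norm_pos_iff, ne_eq, (h.posSemidef 0).trace_eq_zero_iff, ← mul_assoc]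
  have hU : IsUnit (U 0) := (Unitary.toUnits ⟨U 0, h.mem_unitaryGroup 0⟩).isUnit
  rwa [hU.mul_left_eq_zero]

open scoped MatrixOrder in
theorem exists_pos_forall_le_norm_trace_succ (h : IsOptimizedIteration R B U)
    (hR : R.IsHermitian) (hNPSD : ¬ R.PosSemidef) (h0 : R * B 0 ≠ 0) :
    ∃ c > 0, ∀ k, c ≤ ‖(R * (B (k + 1) * U (k + 1))).trace‖ := by
  obtain ⟨ε, hε, hgap⟩ := exists_pos_forall_mul_le_of_not_nonneg hR.isSelfAdjoint
    (nonneg_iff_posSemidef.not.2 hNPSD)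
  refine ⟨ε * ‖(R * (B 0 * U 0)).trace‖, mul_pos hε (h.norm_trace_zero_pos h0), fun k ↦ ?_⟩
  calc ε * ‖(R * (B 0 * U 0)).trace‖
      ≤ ε * ∑ j ∈ Finset.range (k + 1), ‖(R * (B j * U j)).trace‖ := by
        gcongr
        exact Finset.single_le_sum (f := fun j ↦ ‖(R * (B j * U j)).trace‖)
          (fun _ _ ↦ norm_nonneg _) (by simp)
    _ ≤ _ := hgap _ _ (h.algebraMap_norm_trace_add_smul_nonneg hR (k + 1))

theorem tendsto_re_trace_atBot (h : IsOptimizedIteration R B U) (hR : R.IsHermitian)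
    (htr : RCLike.re R.trace < 2) (hNPSD : ¬ R.PosSemidef) (h0 : R * B 0 ≠ 0) :
    Tendsto (fun k ↦ RCLike.re (R * (B k * (B k)ᴴ)).trace) atTop atBot := by
  obtain ⟨c, hc, hle⟩ := h.exists_pos_forall_le_norm_trace_succ hR hNPSD h0
  have hκ : 0 < 2 - RCLike.re R.trace := sub_pos.2 htr
  rw [← tendsto_add_atTop_iff_nat 1]
  refine tendsto_atBot_of_succ_le_sub (mul_pos hκ (pow_pos hc 2)) fun k ↦ ?_
  rw [h.re_trace_succ hR (k + 1)]
  gcongr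
  exact hle k

end IsOptimizedIteration

theorem optimized_iteration_detects_general {R : Matrix n n 𝕜} {B U : ℕ → Matrix n n 𝕜}
    (hR : R.IsHermitian) (htr : RCLike.re R.trace < 2) (hNPSD : ¬ R.PosSemidef)
    (h1 : R * B 1 ≠ 0) (hU : ∀ k, 1 ≤ k → U k ∈ unitaryGroup n 𝕜)
    (hB : ∀ k, 1 ≤ k →
      B (k + 1) = B k * U k - (R * (B k * U k)).trace • (1 : Matrix n n 𝕜))
    (hopt : ∀ k, 1 ≤ k → (R * (B k * U k)).PosSemidef) :
    Tendsto (fun k ↦ RCLike.re (R * (B k * (B k)ᴴ)).trace) atTop atBot ∧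
      ∃ N₀ : ℕ, ∀ k, N₀ ≤ k → RCLike.re (R * (B k * (B k)ᴴ)).trace < 0 := by
  have hiter : IsOptimizedIteration R (fun k ↦ B (k + 1)) fun k ↦ U (k + 1) :=
    ⟨fun k ↦ hU _ k.succ_pos, fun k ↦ hB _ k.succ_pos, fun k ↦ hopt _ k.succ_pos⟩
  have hw : Tendsto (fun k ↦ RCLike.re (R * (B k * (B k)ᴴ)).trace) atTop atBot :=
    (tendsto_add_atTop_iff_nat 1).1 (hiter.tendsto_re_trace_atBot hR htr hNPSD h1)
  exact ⟨hw, eventually_atTop.1 (hw.eventually_lt_atBot 0)⟩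

end Matrix

/-- **Detection for the optimized iteration.**
Let `R` be Hermitian with `trace R = 1` and not positive semidefinite, let `B 1` be
positive definite, and suppose the unitaries in the iteration
`B (n+1) = B n * U n - trace(R * B n * U n) • 𝟙` are chosen optimally, i.e.
`R * B n * U n` is positive semidefinite for every `n ≥ 1`.  Then the expectation values
`w n = trace(R * B n * B nᴴ)` diverge to `-∞`; in particular there exists `N₀` such that
`w n < 0` for all `n ≥ N₀`, so the optimized iteration always detects the state. -/
theorem optimized_iteration_detects
    {d : ℕ} (hd : 1 ≤ d)
    (R : Matrix (Fin d) (Fin d) ℂ) (hR : R.IsHermitian) (htr : R.trace = 1)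
    (hNPSD : ¬ R.PosSemidef)
    (B U : ℕ → Matrix (Fin d) (Fin d) ℂ)
    (hB1 : (B 1).PosDef)
    (hU : ∀ n, 1 ≤ n → U n ∈ Matrix.unitaryGroup (Fin d) ℂ)
    (hB : ∀ n, 1 ≤ n →
      B (n + 1) = B n * U n
        - ((R * (B n * U n)).trace) • (1 : Matrix (Fin d) (Fin d) ℂ))
    (hopt : ∀ n, 1 ≤ n → (R * (B n * U n)).PosSemidef) :
    Tendsto (fun n => ((R * (B n * (B n)ᴴ)).trace).re) atTop atBot ∧
      ∃ N₀ : ℕ, ∀ n, N₀ ≤ n → ((R * (B n * (B n)ᴴ)).trace).re < 0 := by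
  have h1 : R * B 1 ≠ 0 := hB1.isUnit.mul_left_eq_zero.not.2 fun hR0 ↦ hNPSD (hR0 ▸ .zero)
  exact optimized_iteration_detects_general hR (by norm_num [htr]) hNPSD h1 hU hB hopt
end

section
/- Single averaging step for the averaged iteration: let R be Hermitian with trace(R) = 1, let A be a Hermitian d×d matrix, and let B be any d×d matrix. Define B′(U) = B·U − trace(R·B·U)·𝟙. Then ∫_{U(d)} trace(A · B′(U) B′(U)†) dμ(U) = trace(A′ · B B†), where A′ = A + (1/d)·[trace(A)·R² − (R·A + A·R)]. -/
open Matrix MeasureTheory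

/-!
Expanding `trace (A * (B′ * B′ᴴ))` with `B′ = B * U - c • 1` and `c = trace (R * B * U)`, the
quadratic term `B * U * (B * U)ᴴ = B * Bᴴ` does not depend on `U`, and each remaining term is a
multiple of some `trace (X * U) * star (trace (Y * U))`. By left invariance under sign changes and
permutations of the rows, distinct rows of `U` are uncorrelated and all rows have the same
covariance. The row covariances sum to the identity because `U` is unitary, so each of them is
`d⁻¹ • 1`, and `trace (X * U) * star (trace (Y * U))` has mean `d⁻¹ * trace (X * Yᴴ)`.
-/

section TraceSums

variable {m n p R : Type*} [Fintype m] [Fintype n]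

theorem trace_mul_eq_sum_prod [NonUnitalNonAssocSemiring R] (X : Matrix m n R) (Y : Matrix n m R) :
    (X * Y).trace = ∑ s : n × m, X s.2 s.1 * Y s.1 s.2 := by
  rw [Fintype.sum_prod_type_right]
  rfl

variable [CommSemiring R] [StarRing R]

theorem trace_mul_mul_star_trace_mul_eq_sum (X Y : Matrix m n R) (U : Matrix n m R) :
    (X * U).trace * star (Y * U).trace =
      ∑ s : n × m, ∑ t : n × m,
        X s.2 s.1 * star (Y t.2 t.1) * (U s.1 s.2 * star (U t.1 t.2)) := by
  simp only [trace_mul_eq_sum_prod, star_sum, star_mul', Finset.sum_mul_sum, mul_mul_mul_comm]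

theorem trace_mul_mul_conjTranspose_mul [Fintype p] (X Y : Matrix p m R) (B : Matrix m n R) :
    (X * B * (Y * B)ᴴ).trace = (Yᴴ * X * (B * Bᴴ)).trace := by
  rw [conjTranspose_mul, ← Matrix.mul_assoc, trace_mul_comm]
  simp only [Matrix.mul_assoc]

end TraceSums

section UnitaryMatrices

variable {m n R : Type*} [Fintype n] [DecidableEq n] [CommRing R] [StarRing R]

theorem trace_mul_sub_smul_one_mul_conjTranspose (A X : Matrix n n R) (c : R) :
    (A * ((X - c • 1) * (X - c • 1)ᴴ)).trace =
      (A * (X * Xᴴ)).trace - (A * X).trace * star c - c * star (Aᴴ * X).trace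
        + A.trace * (c * star c) := by
  have hstar : star (Aᴴ * X).trace = (A * Xᴴ).trace := by
    rw [← trace_conjTranspose, conjTranspose_mul, conjTranspose_conjTranspose, trace_mul_comm]
  simp only [hstar, conjTranspose_sub, conjTranspose_smul, conjTranspose_one, Matrix.mul_sub,
    Matrix.sub_mul, Matrix.mul_smul, Matrix.smul_mul, Matrix.mul_one, Matrix.one_mul, trace_sub,
    trace_smul, smul_eq_mul]
  ring

theorem mul_unitary_mul_conjTranspose_self (B : Matrix m n R) (U : unitaryGroup n R) :
    B * (U : Matrix n n R) * (B * (U : Matrix n n R))ᴴ = B * Bᴴ := by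
  have hU : (U : Matrix n n R) * (U : Matrix n n R)ᴴ = 1 := mem_unitaryGroup_iff.mp U.2
  rw [conjTranspose_mul, Matrix.mul_assoc, ← Matrix.mul_assoc U.1, hU, Matrix.one_mul]

theorem sum_unitary_entry_mul_star_entry (U : unitaryGroup n R) (j l : n) :
    ∑ i, U.1 i j * star (U.1 i l) = if j = l then 1 else 0 := by
  have hU := congrFun₂ (UnitaryGroup.star_mul_self U) l j
  simpa only [mul_apply, star_apply, mul_comm, one_apply, eq_comm] using hU

theorem diagonal_mem_unitaryGroup {v : n → R} (hv : ∀ i, v i * star (v i) = 1) :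
    diagonal v ∈ unitaryGroup n R := by
  rw [mem_unitaryGroup_iff, star_eq_conjTranspose, diagonal_conjTranspose, diagonal_mul_diagonal,
    ← diagonal_one]
  exact congrArg diagonal (funext hv)

theorem permMatrix_mem_unitaryGroup (σ : Equiv.Perm n) : σ.permMatrix R ∈ unitaryGroup n R := by
  rw [mem_unitaryGroup_iff, star_eq_conjTranspose, conjTranspose_permMatrix, ← permMatrix_mul,
    inv_mul_cancel, permMatrix_one]

end UnitaryMatrices

section HaarMoments

variable {𝕜 n : Type*} [RCLike 𝕜] [Fintype n] [DecidableEq n]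
  [MeasurableSpace (unitaryGroup n 𝕜)] [BorelSpace (unitaryGroup n 𝕜)]
  (μ : Measure (unitaryGroup n 𝕜))

theorem integrable_entry_mul_star_entry [IsFiniteMeasure μ] (i j k l : n) :
    Integrable (fun U : unitaryGroup n 𝕜 => U.1 i j * star (U.1 k l)) μ := by
  refine .of_bound (C := 1) (Continuous.aestronglyMeasurable ?_) (.of_forall fun U => ?_)
  · have hval : Continuous fun U : unitaryGroup n 𝕜 => U.1 := continuous_subtype_val
    exact (hval.matrix_elem i j).mul (hval.matrix_elem k l).star
  · rw [norm_mul, norm_star]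
    exact mul_le_one₀ (entry_norm_bound_of_unitary U.2 i j) (norm_nonneg _)
      (entry_norm_bound_of_unitary U.2 k l)

theorem integrable_trace_mul_star_trace [IsFiniteMeasure μ] (X Y : Matrix n n 𝕜) :
    Integrable (fun U : unitaryGroup n 𝕜 => (X * U.1).trace * star (Y * U.1).trace) μ := by
  simp only [trace_mul_mul_star_trace_mul_eq_sum]
  exact integrable_finsetSum _ fun s _ => integrable_finsetSum _ fun t _ =>
    (integrable_entry_mul_star_entry μ s.1 s.2 t.1 t.2).const_mul _

variable [μ.IsMulLeftInvariant]

theorem integral_entry_mul_star_entry_of_row_ne {i k : n} (hik : i ≠ k) (j l : n) :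
    ∫ U : unitaryGroup n 𝕜, U.1 i j * star (U.1 k l) ∂μ = 0 := by
  let v : n → 𝕜 := Function.update 1 i (-1)
  have hv : diagonal v ∈ unitaryGroup n 𝕜 := diagonal_mem_unitaryGroup fun a => by
    by_cases ha : a = i <;> simp [v, ha]
  have hflip := integral_mul_left_eq_self (μ := μ) (fun U => U.1 i j * star (U.1 k l)) ⟨_, hv⟩
  simp only [UnitaryGroup.mul_val, diagonal_mul, v, Function.update_self,
    Function.update_of_ne hik.symm, Pi.one_apply, neg_mul, one_mul, integral_neg] at hflip
  exact self_eq_neg.mp hflip.symm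

theorem integral_entry_mul_star_entry_row_eq (i k j l : n) :
    ∫ U : unitaryGroup n 𝕜, U.1 i j * star (U.1 i l) ∂μ =
      ∫ U : unitaryGroup n 𝕜, U.1 k j * star (U.1 k l) ∂μ := by
  have hswap := integral_mul_left_eq_self (μ := μ) (fun U => U.1 k j * star (U.1 k l))
    ⟨_, permMatrix_mem_unitaryGroup (Equiv.swap i k)⟩
  simpa [Equiv.Perm.permMatrix, PEquiv.toMatrix_toPEquiv_mul] using hswap

variable [IsProbabilityMeasure μ]

theorem integral_entry_mul_star_entry_same_row (i j l : n) :
    ∫ U : unitaryGroup n 𝕜, U.1 i j * star (U.1 i l) ∂μ =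
      if j = l then (Fintype.card n : 𝕜)⁻¹ else 0 := by
  have : Nonempty n := ⟨i⟩
  have hcard : (Fintype.card n : 𝕜) ≠ 0 := Nat.cast_ne_zero.mpr Fintype.card_ne_zero
  have hsum : (Fintype.card n : 𝕜) * ∫ U : unitaryGroup n 𝕜, U.1 i j * star (U.1 i l) ∂μ =
      if j = l then 1 else 0 := calc
    _ = ∑ k, ∫ U : unitaryGroup n 𝕜, U.1 k j * star (U.1 k l) ∂μ := by
      simp only [integral_entry_mul_star_entry_row_eq μ _ i, Finset.sum_const, Finset.card_univ,
        nsmul_eq_mul]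
    _ = ∫ U : unitaryGroup n 𝕜, ∑ k, U.1 k j * star (U.1 k l) ∂μ :=
      (integral_finsetSum _ fun k _ => integrable_entry_mul_star_entry μ k j k l).symm
    _ = if j = l then 1 else 0 := by
      simp only [sum_unitary_entry_mul_star_entry, integral_const, probReal_univ, one_smul]
  rw [(eq_inv_mul_iff_mul_eq₀ hcard).mpr hsum, mul_ite, mul_one, mul_zero]

theorem integral_entry_mul_star_entry (i j k l : n) :
    ∫ U : unitaryGroup n 𝕜, U.1 i j * star (U.1 k l) ∂μ =
      if i = k ∧ j = l then (Fintype.card n : 𝕜)⁻¹ else 0 := by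
  obtain rfl | hik := eq_or_ne i k
  · simpa only [true_and] using integral_entry_mul_star_entry_same_row μ i j l
  · simpa only [hik, false_and, if_false] using integral_entry_mul_star_entry_of_row_ne μ hik j l

theorem integral_trace_mul_star_trace (X Y : Matrix n n 𝕜) :
    ∫ U : unitaryGroup n 𝕜, (X * U.1).trace * star (Y * U.1).trace ∂μ =
      (Fintype.card n : 𝕜)⁻¹ * (X * Yᴴ).trace := by
  have hint (s t : n × n) := (integrable_entry_mul_star_entry μ s.1 s.2 t.1 t.2).const_mul
    (X s.2 s.1 * star (Y t.2 t.1))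
  calc
    _ = ∑ s : n × n, ∑ t : n × n, X s.2 s.1 * star (Y t.2 t.1) *
          ∫ U : unitaryGroup n 𝕜, U.1 s.1 s.2 * star (U.1 t.1 t.2) ∂μ := by
      simp only [trace_mul_mul_star_trace_mul_eq_sum]
      rw [integral_finsetSum _ fun s _ => integrable_finsetSum _ fun t _ => hint s t]
      simp only [integral_finsetSum _ fun t _ => hint _ t, integral_const_mul]
    _ = ∑ s : n × n, X s.2 s.1 * star (Y s.2 s.1) * (Fintype.card n : 𝕜)⁻¹ := by
      simp only [integral_entry_mul_star_entry, ← Prod.ext_iff, mul_ite, mul_zero,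
        Finset.sum_ite_eq, Finset.mem_univ, if_true]
    _ = (Fintype.card n : 𝕜)⁻¹ * (X * Yᴴ).trace := by
      rw [← Finset.sum_mul, mul_comm, trace_mul_eq_sum_prod]
      rfl

theorem integral_trace_mul_mul_star_trace (X Y B : Matrix n n 𝕜) :
    ∫ U : unitaryGroup n 𝕜, (X * (B * U.1)).trace * star (Y * (B * U.1)).trace ∂μ =
      (Fintype.card n : 𝕜)⁻¹ * (Yᴴ * X * (B * Bᴴ)).trace := by
  rw [← trace_mul_mul_conjTranspose_mul, ← integral_trace_mul_star_trace μ]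
  simp only [Matrix.mul_assoc]

theorem averaged_iteration_single_step_general (R A B : Matrix n n 𝕜) :
    ∫ U : unitaryGroup n 𝕜,
        (A * ((B * U.1 - (R * (B * U.1)).trace • (1 : Matrix n n 𝕜))
          * (B * U.1 - (R * (B * U.1)).trace • (1 : Matrix n n 𝕜))ᴴ)).trace ∂μ =
      ((A + (Fintype.card n : 𝕜)⁻¹ • (A.trace • (Rᴴ * R) - (Rᴴ * A + A * R)))
        * (B * Bᴴ)).trace := by
  have hint (X Y : Matrix n n 𝕜) : Integrable (fun U : unitaryGroup n 𝕜 =>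
      (X * (B * U.1)).trace * star (Y * (B * U.1)).trace) μ := by
    simpa only [Matrix.mul_assoc] using integrable_trace_mul_star_trace μ (X * B) (Y * B)
  simp only [trace_mul_sub_smul_one_mul_conjTranspose, mul_unitary_mul_conjTranspose_self]
  rw [integral_add (by fun_prop) (by fun_prop), integral_sub (by fun_prop) (hint R Aᴴ),
    integral_sub (by fun_prop) (hint A R), integral_const_mul]
  simp only [integral_trace_mul_mul_star_trace, conjTranspose_conjTranspose, integral_const,
    probReal_univ, one_smul, Matrix.add_mul, Matrix.sub_mul, Matrix.smul_mul, trace_add, trace_sub,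
    trace_smul, smul_eq_mul]
  ring

end HaarMoments

/-- **Single averaging step for the averaged iteration.**
Let `μ` be the Haar probability measure on `U(d)`, let `R` be Hermitian with
`trace R = 1`, let `A` be Hermitian and `B` arbitrary.  With
`B′(U) = B * U - trace(R * B * U) • 𝟙`, one has
`∫ trace(A * B′(U) * B′(U)ᴴ) dμ(U) = trace(A′ * B * Bᴴ)` where
`A′ = A + (1/d) • (trace(A) • R² - (R * A + A * R))`. -/
theorem averaged_iteration_single_step
    {d : ℕ}
    [MeasurableSpace (Matrix.unitaryGroup (Fin d) ℂ)]
    [BorelSpace (Matrix.unitaryGroup (Fin d) ℂ)]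
    (μ : Measure (Matrix.unitaryGroup (Fin d) ℂ))
    [μ.IsHaarMeasure] [IsProbabilityMeasure μ]
    (R A B : Matrix (Fin d) (Fin d) ℂ)
    (hR : R.IsHermitian) (htrR : R.trace = 1) (hA : A.IsHermitian) :
    ∫ U : Matrix.unitaryGroup (Fin d) ℂ,
        (A * ((B * (U : Matrix (Fin d) (Fin d) ℂ)
                - ((R * (B * (U : Matrix (Fin d) (Fin d) ℂ))).trace)
                  • (1 : Matrix (Fin d) (Fin d) ℂ))
              * (B * (U : Matrix (Fin d) (Fin d) ℂ)
                - ((R * (B * (U : Matrix (Fin d) (Fin d) ℂ))).trace)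
                  • (1 : Matrix (Fin d) (Fin d) ℂ))ᴴ)).trace ∂μ
      = ((A + ((d : ℂ))⁻¹ • (A.trace • R ^ 2 - (R * A + A * R))) * (B * Bᴴ)).trace := by
  simpa only [Fintype.card_fin, hR.eq, pow_two] using
    averaged_iteration_single_step_general μ R A B
end
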